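/- Let s, n₁ ≥ 0 and let V₁ be an s×s integer matrix whose top-left 2n₁×2n₁ block is Alexander trivial. Let g, n₂ ≥ 0, m = n₂ + g, and let V₂ be a 2m×2m integer matrix such that: (i) the top-left 2n₂×2n₂ block A of V₂ is Alexander trivial, and (ii) V₂ − V₂ᵀ = (A − Aᵀ) ⊕ J_{2g}. Then for every integer w ≥ 1, the block diagonal matrix V₁ ⊕ S_w(V₂) is congruent over ℤ to an integer matrix whose top-left block of size 2(n₁ + wm − g) × 2(n₁ + wm − g) is Alexander trivial. -/

import Mathlib

open Matrix Polynomial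

/-- `S_w(V)`: the `wN×wN` block matrix with `(i,j)`-block `V` for `i ≤ j` and `Vᵀ` for `i > j`. -/
def cableS {R : Type*} [CommRing R] {ι : Type*} (w : ℕ) (V : Matrix ι ι R) :
    Matrix (Fin w × ι) (Fin w × ι) R :=
  Matrix.of fun i j => if i.1 ≤ j.1 then V i.2 j.2 else V j.2 i.2

/-- The Alexander determinant polynomial `det(t·B − Bᵀ)` of an integer square matrix `B`. -/
noncomputable def alexPoly {ι : Type*} [Fintype ι] [DecidableEq ι] (B : Matrix ι ι ℤ) : ℤ[X] :=
  ((X : ℤ[X]) • B.map (fun a : ℤ => (a : ℤ[X]))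
    - Bᵀ.map (fun a : ℤ => (a : ℤ[X]))).det

/-!
Let `N` be the nilpotent shift of the strands of a cable. Two consecutive strands of `S_w(V)` differ
only through `V - Vᵀ`, so multiplying the pencil `t S_w(A) - S_w(A)ᵀ` by `1 - N` on the left and by
the inverse of `1 - tN` on the right leaves a block triangular matrix with diagonal blocks
`t^w A - Aᵀ, A - Aᵀ, …, A - Aᵀ`. This is the cabling formula for the Alexander polynomial, which
makes `S_w(A)` Alexander trivial when `A` is.

Now let `a, b` be the two halves of the symplectic basis, with copies `aⁱ, bⁱ` on the strand `i`.
The differences `aⁱ⁺¹ - aⁱ` span an isotropic subspace orthogonal to `S_w(A)`, and they pair with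
`b⁰, …, bʷ⁻²` through `-1` on one side of the diagonal and `-N` on the other. Adjoining both
families to `S_w(A)` multiplies the Alexander polynomial by `det(X - N) det(1 - X N)`, a power of
`X`, and omits only `2g` basis vectors of `S_w(V)`.
-/

open scoped Kronecker

section BlockDeterminants

variable {R : Type*} [CommRing R]

theorem det_of_blockTriangular_fst {m n : Type*} [Fintype m] [LinearOrder m] [Fintype n]
    [DecidableEq n] {M : Matrix (m × n) (m × n) R} (hM : M.BlockTriangular Prod.fst) :
    M.det = ∏ i, (M.submatrix (Prod.mk i) (Prod.mk i)).det := by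
  rw [hM.det_fintype]
  refine Finset.prod_congr rfl fun i _ => ?_
  let e : n ≃ {p : m × n // p.1 = i} :=
    ⟨fun x => ⟨(i, x), rfl⟩, fun p => p.1.2, fun _ => rfl, by rintro ⟨⟨_, _⟩, rfl⟩; rfl⟩
  exact (det_submatrix_equiv_self e _).symm

theorem det_fromBlocks_fromBlocks_zero₁₁ {m n : Type*} [Fintype m] [DecidableEq m]
    [Fintype n] [DecidableEq n] (A : Matrix m m R) (B : Matrix m n R) (C : Matrix n m R)
    (P Q D : Matrix n n R) :
    (fromBlocks A (fromCols 0 B) (fromRows 0 C) (fromBlocks 0 P Q D)).det =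
      A.det * (-P).det * Q.det := by
  have det_neg_J : (-J n R).det = 1 :=
    SymplecticGroup.det_eq_one (SymplecticGroup.neg_mem (SymplecticGroup.J_mem n R))
  have swap_columns :
      (fromBlocks A (fromCols 0 B) (fromRows 0 C) (fromBlocks 0 P Q D) *
          fromBlocks 1 0 0 (-J n R)).submatrix (Equiv.sumAssoc m n n) (Equiv.sumAssoc m n n) =
        fromBlocks (fromBlocks A (-B) 0 (-P)) 0 (fromCols C (-D)) Q := by
    simp only [J, fromBlocks_neg, fromBlocks_multiply, fromCols_mul_fromBlocks]
    ext ((i | i) | i) ((j | j) | j) <;> simp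
  have hdet := congrArg det swap_columns
  rwa [det_submatrix_equiv_self, det_mul, det_fromBlocks_zero₂₁, det_one, det_neg_J, one_mul,
    mul_one, det_fromBlocks_zero₁₂, det_fromBlocks_zero₂₁] at hdet

end BlockDeterminants

section StrandDifferences

variable {R : Type*} [CommRing R] {ι κ : Type*} [Fintype ι] [DecidableEq ι]

/-- The nilpotent `n × n` matrix whose nonzero entries are the ones just below the diagonal;
multiplication by it on the left moves every row one place down. -/
def lowerShift (R : Type*) [Zero R] [One R] (n : ℕ) : Matrix (Fin n) (Fin n) R :=
  of fun i j => if (i : ℕ) = j + 1 then 1 else 0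

/-- On `n` parallel copies of a basis indexed by `ι`, the change of basis subtracting from the
`x`-th vector of each copy `d x` times the same vector of the preceding copy. -/
def strandDiff (n : ℕ) (d : ι → R) : Matrix (Fin n × ι) (Fin n × ι) R :=
  1 - lowerShift R n ⊗ₖ diagonal d

theorem det_one_kronecker_sub_lowerShift_kronecker (n : ℕ) (A B : Matrix ι ι R) :
    ((1 : Matrix (Fin n) (Fin n) R) ⊗ₖ A - lowerShift R n ⊗ₖ B).det = A.det ^ n := by
  have triangular : ((1 : Matrix (Fin n) (Fin n) R) ⊗ₖ A - lowerShift R n ⊗ₖ B)ᵀ.BlockTriangular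
      Prod.fst := by
    rintro ⟨i, x⟩ ⟨j, y⟩ (hij : j < i)
    have : (j : ℕ) ≠ i + 1 := by lia
    simp [lowerShift, this, hij.ne]
  have diagonal_block (i : Fin n) :
      ((1 : Matrix (Fin n) (Fin n) R) ⊗ₖ A - lowerShift R n ⊗ₖ B)ᵀ.submatrix
        (Prod.mk i) (Prod.mk i) = Aᵀ := by
    ext; simp [lowerShift]
  rw [← det_transpose, det_of_blockTriangular_fst triangular]
  simp only [diagonal_block, det_transpose, Finset.prod_const, Finset.card_univ, Fintype.card_fin]

theorem det_strandDiff (n : ℕ) (d : ι → R) : (strandDiff n d).det = 1 := by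
  simpa [strandDiff] using det_one_kronecker_sub_lowerShift_kronecker n (1 : Matrix ι ι R)
    (diagonal d)

theorem strandDiff_mul_apply_succ {k : ℕ} (d : ι → R) (M : Matrix (Fin (k + 1) × ι) κ R)
    (i : Fin k) (x : ι) (q : κ) :
    (strandDiff (k + 1) d * M) (i.succ, x) q = M (i.succ, x) q - d x * M (i.castSucc, x) q := by
  have (j : Fin (k + 1)) : (i : ℕ) = j ↔ j = i.castSucc := by simp [Fin.ext_iff, eq_comm]
  simp [strandDiff, Matrix.sub_mul, mul_apply (M := _ ⊗ₖ _), Fintype.sum_prod_type, lowerShift,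
    diagonal_apply, this]

theorem strandDiff_mul_apply_zero {k : ℕ} (d : ι → R) (M : Matrix (Fin (k + 1) × ι) κ R)
    (x : ι) (q : κ) : (strandDiff (k + 1) d * M) (0, x) q = M (0, x) q := by
  simp [strandDiff, Matrix.sub_mul, mul_apply (M := _ ⊗ₖ _), lowerShift]

theorem strandDiff_mul_apply_of_eq_zero {n : ℕ} {d : ι → R} (M : Matrix (Fin n × ι) κ R)
    (i : Fin n) {x : ι} (hx : d x = 0) (q : κ) : (strandDiff n d * M) (i, x) q = M (i, x) q := by
  simp [strandDiff, Matrix.sub_mul, mul_apply (M := _ ⊗ₖ _), diagonal_apply, hx]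

theorem mul_strandDiff_transpose_apply_of_eq_zero {n : ℕ} {d : ι → R}
    (M : Matrix κ (Fin n × ι) R) (p : κ) (j : Fin n) {y : ι} (hy : d y = 0) :
    (M * (strandDiff n d)ᵀ) p (j, y) = M p (j, y) := by
  rw [← transpose_apply (M * _), transpose_mul, transpose_transpose,
    strandDiff_mul_apply_of_eq_zero _ _ hy, transpose_apply]

end StrandDifferences

section Cables

variable {R : Type*} [CommRing R] {ι : Type*} (k : ℕ)

theorem vecMul_lowerShift (y : ℕ → R) (hy : y (k + 1) = 0) :
    (fun j : Fin (k + 1) => y j) ᵥ* lowerShift R (k + 1) = fun j : Fin (k + 1) => y (j + 1) := by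
  ext j
  simp only [vecMul, dotProduct, lowerShift, of_apply, mul_ite, mul_one, mul_zero]
  induction j using Fin.lastCases with
  | last =>
    have (i : Fin (k + 1)) : (i : ℕ) ≠ k + 1 := i.isLt.ne
    simp [this, hy]
  | cast j =>
    have (i : Fin (k + 1)) : (i : ℕ) = j + 1 ↔ i = j.succ := by simp [Fin.ext_iff]
    simp [this]

variable [Fintype ι] [DecidableEq ι]

theorem strandDiff_mul_cableS_apply_succ {d : ι → R} {x : ι} (hx : d x = 1) (V : Matrix ι ι R)
    (i : Fin k) (q : Fin (k + 1) × ι) :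
    (strandDiff (k + 1) d * cableS (k + 1) V) (i.succ, x) q =
      if q.1 = i.castSucc then -(V - Vᵀ) x q.2 else 0 := by
  rw [strandDiff_mul_apply_succ, hx, one_mul]
  simp only [cableS, of_apply, Fin.le_def, Fin.ext_iff, Fin.val_succ, Fin.val_castSucc]
  split_ifs <;> first | lia | simp

theorem strandDiff_mul_cableS_transpose_apply_succ {d : ι → R} {x : ι} (hx : d x = 1)
    (V : Matrix ι ι R) (i : Fin k) (q : Fin (k + 1) × ι) :
    (strandDiff (k + 1) d * (cableS (k + 1) V)ᵀ) (i.succ, x) q =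
      if q.1 = i.succ then -(V - Vᵀ) x q.2 else 0 := by
  rw [strandDiff_mul_apply_succ, hx, one_mul]
  simp only [cableS, transpose_apply, of_apply, Fin.le_def, Fin.ext_iff, Fin.val_succ,
    Fin.val_castSucc]
  split_ifs <;> first | lia | simp

theorem det_one_kronecker_add_vecMulVec_kronecker (y : Fin (k + 1) → R) (A D : Matrix ι ι R) :
    ((1 : Matrix (Fin (k + 1)) (Fin (k + 1)) R) ⊗ₖ D +
      vecMulVec (Pi.single 0 1) y ⊗ₖ A).det = (D + y 0 • A).det * D.det ^ k := by
  have triangular : ((1 : Matrix (Fin (k + 1)) (Fin (k + 1)) R) ⊗ₖ D +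
      vecMulVec (Pi.single 0 1) y ⊗ₖ A).BlockTriangular Prod.fst := by
    rintro ⟨i, x⟩ ⟨j, z⟩ (hji : j < i)
    have : i ≠ 0 := Fin.ne_zero_of_lt hji
    simp [vecMulVec_apply, hji.ne', this]
  have head_block : ((1 : Matrix (Fin (k + 1)) (Fin (k + 1)) R) ⊗ₖ D +
      vecMulVec (Pi.single 0 1) y ⊗ₖ A).submatrix (Prod.mk 0) (Prod.mk 0) = D + y 0 • A := by
    ext; simp [vecMulVec_apply]
  have tail_block (i : Fin k) : ((1 : Matrix (Fin (k + 1)) (Fin (k + 1)) R) ⊗ₖ D +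
      vecMulVec (Pi.single 0 1) y ⊗ₖ A).submatrix (Prod.mk i.succ) (Prod.mk i.succ) = D := by
    ext; simp [vecMulVec_apply]
  rw [det_of_blockTriangular_fst triangular, Fin.prod_univ_succ, head_block]
  simp only [tail_block, Finset.prod_const, Finset.card_univ, Fintype.card_fin]

theorem strandDiff_one_mul_cableS_pencil (A : Matrix ι ι R) (t : R) :
    strandDiff (k + 1) 1 * (t • cableS (k + 1) A - (cableS (k + 1) A)ᵀ) =
      (1 ⊗ₖ (A - Aᵀ) +
        vecMulVec (Pi.single 0 1) (fun j : Fin (k + 1) => t ^ (k + 1 - j : ℕ) - 1) ⊗ₖ A) *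
        strandDiff (k + 1) fun _ => t := by
  have scaled_shift : strandDiff (k + 1) (fun _ : ι => t) =
      1 - lowerShift R (k + 1) ⊗ₖ (t • (1 : Matrix ι ι R)) := by
    rw [strandDiff, smul_one_eq_diagonal]
  have shifted_row := vecMul_lowerShift k (fun j => t ^ (k + 1 - j) - 1) (by simp)
  rw [scaled_shift, Matrix.mul_sub (_ + _), Matrix.mul_one, Matrix.add_mul, ← mul_kronecker_mul,
    ← mul_kronecker_mul, vecMulVec_mul, shifted_row, Matrix.one_mul, Matrix.mul_smul,
    Matrix.mul_smul, Matrix.mul_one, Matrix.mul_one, Matrix.mul_sub, Matrix.mul_smul]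
  ext ⟨i, x⟩ ⟨j, y⟩
  simp only [Matrix.sub_apply, Matrix.add_apply, Matrix.smul_apply, smul_eq_mul,
    kroneckerMap_apply, vecMulVec_apply, one_apply]
  induction i using Fin.cases with
  | zero =>
    have pow_sub : t ^ (k + 1 - j : ℕ) = t * t ^ (k - j : ℕ) := by
      rw [← pow_succ', Nat.succ_sub (Nat.le_of_lt_succ j.isLt)]
    have shift_entry : lowerShift R (k + 1) 0 j = 0 := by simp [lowerShift]
    have upper_entry : cableS (k + 1) A (0, x) (j, y) = A x y := by simp [cableS]
    have lower_entry : cableS (k + 1) A (j, y) (0, x) = if 0 = j then A y x else A x y := by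
      simp [cableS, eq_comm]
    simp only [strandDiff_mul_apply_zero, transpose_apply, upper_entry, lower_entry, shift_entry,
      pow_sub, Pi.single_eq_same, Nat.add_sub_add_right]
    split_ifs <;> ring
  | succ i =>
    have shift_entry : lowerShift R (k + 1) i.succ j = if j = i.castSucc then 1 else 0 := by
      simp [lowerShift, Fin.ext_iff, eq_comm]
    rw [strandDiff_mul_cableS_apply_succ k (d := 1) (x := x) rfl,
      strandDiff_mul_cableS_transpose_apply_succ k (d := 1) (x := x) rfl, shift_entry,
      Pi.single_eq_of_ne i.succ_ne_zero]
    simp only [eq_comm (a := j), Matrix.sub_apply]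
    split_ifs <;> ring

theorem det_cableS_pencil (A : Matrix ι ι R) (t : R) :
    (t • cableS (k + 1) A - (cableS (k + 1) A)ᵀ).det =
      (t ^ (k + 1) • A - Aᵀ).det * (A - Aᵀ).det ^ k := by
  have hdet := congrArg det (strandDiff_one_mul_cableS_pencil k A t)
  rw [det_mul, det_mul, det_strandDiff, det_strandDiff, one_mul, mul_one,
    det_one_kronecker_add_vecMulVec_kronecker] at hdet
  convert hdet using 3
  simp only [Fin.val_zero, Nat.sub_zero, sub_smul, one_smul]
  abel

end Cables

section AlexanderPolynomial

variable {m n : Type*}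

/-- An integer matrix viewed as a matrix of constant polynomials, in the form in which it enters
`alexPoly`. -/
noncomputable abbrev constPoly (B : Matrix m n ℤ) : Matrix m n ℤ[X] :=
  B.map fun a : ℤ => (a : ℤ[X])

variable [Fintype m] [DecidableEq m] [Fintype n] [DecidableEq n]

theorem alexPoly_comp (B : Matrix m m ℤ) (p : ℤ[X]) :
    (alexPoly B).comp p = (p • constPoly B - (constPoly B)ᵀ).det := by
  rw [alexPoly, ← coe_compRingHom_apply, RingHom.map_det]
  congr 1
  apply Matrix.ext
  simp

theorem alexPoly_eq_det_pencil (B : Matrix m m ℤ) :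
    alexPoly B = ((X : ℤ[X]) • constPoly B - (constPoly B)ᵀ).det :=
  rfl

theorem alexPoly_submatrix_equiv (B : Matrix m m ℤ) (e : n ≃ m) :
    alexPoly (B.submatrix e e) = alexPoly B :=
  det_submatrix_equiv_self e ((X : ℤ[X]) • constPoly B - (constPoly B)ᵀ)

theorem alexPoly_fromBlocks_zero_zero (A : Matrix m m ℤ) (B : Matrix n n ℤ) :
    alexPoly (fromBlocks A 0 0 B) = alexPoly A * alexPoly B := by
  simp only [alexPoly_eq_det_pencil]
  rw [← det_fromBlocks_zero₁₂ _ 0]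
  congr 1
  apply Matrix.ext
  rintro (i | i) (j | j) <;> simp

theorem alexPoly_fromBlocks_fromBlocks_zero₁₁ (A : Matrix m m ℤ) (B : Matrix m n ℤ)
    (C : Matrix n m ℤ) (P Q D : Matrix n n ℤ) :
    alexPoly (fromBlocks A (fromCols 0 B) (fromRows 0 C) (fromBlocks 0 P Q D)) =
      alexPoly A * (constPoly Q - (X : ℤ[X]) • (constPoly P)ᵀ).det *
        ((X : ℤ[X]) • constPoly Q - (constPoly P)ᵀ).det := by
  have pencil_antidiagonal :
      (constPoly Q - (X : ℤ[X]) • (constPoly P)ᵀ).det =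
        (-((X : ℤ[X]) • constPoly P - (constPoly Q)ᵀ)).det := by
    rw [← det_transpose, neg_sub, transpose_sub, transpose_smul, transpose_transpose]
  rw [pencil_antidiagonal, alexPoly_eq_det_pencil, alexPoly_eq_det_pencil,
    ← det_fromBlocks_fromBlocks_zero₁₁ _ ((X : ℤ[X]) • constPoly B - (constPoly C)ᵀ)
      ((X : ℤ[X]) • constPoly C - (constPoly B)ᵀ) _ _
      ((X : ℤ[X]) • constPoly D - (constPoly D)ᵀ)]
  congr 1
  apply Matrix.ext
  rintro (i | i | i) (j | j | j) <;> simp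

theorem alexPoly_cableS (k : ℕ) (A : Matrix m m ℤ) :
    alexPoly (cableS (k + 1) A) =
      (alexPoly A).comp (X ^ (k + 1)) * C ((alexPoly A).eval 1) ^ k := by
  have constPoly_cableS : constPoly (cableS (k + 1) A) = cableS (k + 1) (constPoly A) := by
    apply Matrix.ext
    intro i j
    simp only [cableS, map_apply, of_apply]
    split_ifs <;> rfl
  rw [alexPoly_eq_det_pencil, constPoly_cableS, det_cableS_pencil, alexPoly_comp,
    ← Polynomial.comp_one, alexPoly_comp, one_smul]

theorem alexPoly_cableS_of_eq_X_pow (k : ℕ) {A : Matrix m m ℤ} {n : ℕ}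
    (hA : alexPoly A = X ^ n) : alexPoly (cableS (k + 1) A) = X ^ ((k + 1) * n) := by
  simp [alexPoly_cableS, hA, pow_mul]

theorem exists_equiv_sum_fin_comp_eq_inl {σ τ : Type*} [Fintype σ] [Fintype τ] (φ : σ ↪ τ)
    {a b : ℕ} (hσ : Fintype.card σ = a) (hτ : Fintype.card τ = a + b) :
    ∃ (e : τ ≃ Fin a ⊕ Fin b) (f : σ ≃ Fin a), ∀ x, e (φ x) = Sum.inl (f x) := by
  classical
  have card_compl : Fintype.card ((Set.range φ)ᶜ : Set τ) = b := by
    rw [Fintype.card_compl_set, ← Fintype.card_congr (Equiv.ofInjective φ φ.injective)]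
    lia
  let f := Fintype.equivFinOfCardEq hσ
  refine ⟨(Equiv.Set.sumCompl (Set.range φ)).symm.trans (Equiv.sumCongr
    ((Equiv.ofInjective φ φ.injective).symm.trans f) (Fintype.equivFinOfCardEq card_compl)), f, ?_⟩
  intro x
  have symm_apply : (Equiv.Set.sumCompl (Set.range φ)).symm (φ x) = .inl ⟨φ x, x, rfl⟩ :=
    Equiv.Set.sumCompl_symm_apply_of_mem _
  simp [symm_apply, Equiv.ofInjective_symm_apply]

theorem exists_equiv_alexPoly_toBlocks₁₁_eq {σ τ : Type*} [Fintype σ] [DecidableEq σ] [Fintype τ]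
    (φ : σ ↪ τ) {a b : ℕ} (hσ : Fintype.card σ = a) (hτ : Fintype.card τ = a + b)
    (M : Matrix τ τ ℤ) :
    ∃ e : τ ≃ Fin a ⊕ Fin b,
      alexPoly (reindex e e M).toBlocks₁₁ = alexPoly (M.submatrix φ φ) := by
  obtain ⟨e, f, hef⟩ := exists_equiv_sum_fin_comp_eq_inl φ hσ hτ
  refine ⟨e, ?_⟩
  rw [← alexPoly_submatrix_equiv _ f]
  congr 1
  apply Matrix.ext
  simp [toBlocks₁₁, ← hef]

end AlexanderPolynomial

section Satellites

variable {R : Type*} [CommRing R] {α γ : Type*}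

/-- The basis vectors spanning the large Alexander-trivial summand of the cable: in every copy those
indexed by `α`, in every copy but the first those of the first family `γ` (to be replaced by
differences of successive copies), and in every copy but the last those of the second family `γ`. -/
def cableSummand (k : ℕ) (α γ : Type*) :
    (Fin (k + 1) × α) ⊕ ((Fin k × γ) ⊕ (Fin k × γ)) ↪ Fin (k + 1) × (α ⊕ (γ ⊕ γ)) where
  toFun := Sum.elim (Prod.map id Sum.inl)
    (Sum.elim (Prod.map Fin.succ (Sum.inr ∘ Sum.inl)) (Prod.map Fin.castSucc (Sum.inr ∘ Sum.inr)))
  inj' := by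
    rintro (⟨i, x⟩ | ⟨i, x⟩ | ⟨i, x⟩) (⟨j, y⟩ | ⟨j, y⟩ | ⟨j, y⟩) <;> simp

variable [DecidableEq α] [DecidableEq γ]

/-- The unimodular change of basis of the cable that replaces, in every copy but the first, the
vectors of the first family `γ` by their differences with those of the preceding copy. -/
def firstFamilyDiff (R : Type*) [CommRing R] (k : ℕ) (α γ : Type*) [DecidableEq α]
    [DecidableEq γ] :
    Matrix (Fin (k + 1) × (α ⊕ (γ ⊕ γ))) (Fin (k + 1) × (α ⊕ (γ ⊕ γ))) R :=
  strandDiff (k + 1) (Sum.elim 0 (Sum.elim 1 0))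

theorem skew_apply_inr_inl {V : Matrix (α ⊕ (γ ⊕ γ)) (α ⊕ (γ ⊕ γ)) R}
    (hV : (V - Vᵀ).toRows₂.toRows₁ = fromCols 0 (fromCols 0 1)) (x : γ) (y : α ⊕ (γ ⊕ γ)) :
    (V - Vᵀ) (.inr (.inl x)) y = if y = .inr (.inr x) then 1 else 0 := by
  refine (congrFun₂ hV x y).trans ?_
  rcases y with y | y | y <;> simp [one_apply, eq_comm]

variable [Fintype α] [Fintype γ] {k : ℕ}

theorem firstFamilyDiff_mul_cableS_apply {V : Matrix (α ⊕ (γ ⊕ γ)) (α ⊕ (γ ⊕ γ)) R}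
    (hV : (V - Vᵀ).toRows₂.toRows₁ = fromCols 0 (fromCols 0 1)) (i : Fin k) (x : γ)
    (q : Fin (k + 1) × (α ⊕ (γ ⊕ γ))) :
    (firstFamilyDiff R k α γ * cableS (k + 1) V) (i.succ, .inr (.inl x)) q =
      -if q = (i.castSucc, .inr (.inr x)) then 1 else 0 := by
  refine (strandDiff_mul_cableS_apply_succ k (by rfl) V i q).trans ?_
  simp only [skew_apply_inr_inl hV, Prod.ext_iff]
  split_ifs <;> simp_all

theorem cableS_mul_firstFamilyDiff_transpose_apply {V : Matrix (α ⊕ (γ ⊕ γ)) (α ⊕ (γ ⊕ γ)) R}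
    (hV : (V - Vᵀ).toRows₂.toRows₁ = fromCols 0 (fromCols 0 1)) (p : Fin (k + 1) × (α ⊕ (γ ⊕ γ)))
    (j : Fin k) (y : γ) :
    (cableS (k + 1) V * (firstFamilyDiff R k α γ)ᵀ) p (j.succ, .inr (.inl y)) =
      -if p = (j.succ, .inr (.inr y)) then 1 else 0 := by
  rw [← transpose_apply (_ * _), transpose_mul, transpose_transpose]
  refine (strandDiff_mul_cableS_transpose_apply_succ k (by rfl) V j p).trans ?_
  simp only [skew_apply_inr_inl hV, Prod.ext_iff]
  split_ifs <;> simp_all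

theorem firstFamilyDiff_conj_cableS_submatrix {V : Matrix (α ⊕ (γ ⊕ γ)) (α ⊕ (γ ⊕ γ)) R}
    (hV : (V - Vᵀ).toRows₂.toRows₁ = fromCols 0 (fromCols 0 1)) :
    ∃ B C D, (firstFamilyDiff R k α γ * cableS (k + 1) V *
        (firstFamilyDiff R k α γ)ᵀ).submatrix (cableSummand k α γ) (cableSummand k α γ) =
      fromBlocks (cableS (k + 1) V.toBlocks₁₁) (fromCols 0 B) (fromRows 0 C)
        (fromBlocks 0 (-1) (-(lowerShift R k ⊗ₖ 1)) D) := by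
  let M := (firstFamilyDiff R k α γ * cableS (k + 1) V *
    (firstFamilyDiff R k α γ)ᵀ).submatrix (cableSummand k α γ) (cableSummand k α γ)
  refine ⟨M.toBlocks₁₂.toCols₂, M.toBlocks₂₁.toRows₂, M.toBlocks₂₂.toBlocks₂₂, ?_⟩
  apply Matrix.ext
  rintro (⟨i, x⟩ | ⟨i, x⟩ | ⟨i, x⟩) (⟨j, y⟩ | ⟨j, y⟩ | ⟨j, y⟩)
  case inl.inl =>
    exact (mul_strandDiff_transpose_apply_of_eq_zero _ _ _ (by rfl)).trans
      (strandDiff_mul_apply_of_eq_zero _ _ (by rfl) _)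
  case inl.inr.inl =>
    rw [Matrix.mul_assoc]
    refine (strandDiff_mul_apply_of_eq_zero _ _ (by rfl) _).trans ?_
    exact (cableS_mul_firstFamilyDiff_transpose_apply hV ..).trans (by simp)
  case inr.inl.inl =>
    refine (mul_strandDiff_transpose_apply_of_eq_zero _ _ _ (by rfl)).trans ?_
    exact (firstFamilyDiff_mul_cableS_apply hV ..).trans (by simp)
  case inr.inl.inr.inl =>
    rw [Matrix.mul_assoc]
    have column_isotropic (l : Fin (k + 1)) : (cableS (k + 1) V * (firstFamilyDiff R k α γ)ᵀ)
        (l, .inr (.inl x)) (j.succ, .inr (.inl y)) = 0 := by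
      simp [cableS_mul_firstFamilyDiff_transpose_apply hV]
    exact (strandDiff_mul_apply_succ _ _ i _ _).trans
      ((congrArg₂ (· - 1 * ·) (column_isotropic _) (column_isotropic _)).trans (by simp))
  case inr.inl.inr.inr =>
    refine (mul_strandDiff_transpose_apply_of_eq_zero _ _ _ (by rfl)).trans ?_
    exact (firstFamilyDiff_mul_cableS_apply hV ..).trans (by simp [one_apply, eq_comm])
  case inr.inr.inr.inl =>
    rw [Matrix.mul_assoc]
    refine (strandDiff_mul_apply_of_eq_zero _ _ (by rfl) _).trans ?_
    exact (cableS_mul_firstFamilyDiff_transpose_apply hV ..).trans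
      (by simp [one_apply, lowerShift, Fin.ext_iff, ← ite_and, and_comm])
  all_goals rfl

theorem det_firstFamilyDiff : (firstFamilyDiff R k α γ).det = 1 :=
  det_strandDiff ..

theorem alexPoly_firstFamilyDiff_conj_cableS_submatrix
    {V : Matrix (α ⊕ (γ ⊕ γ)) (α ⊕ (γ ⊕ γ)) ℤ}
    (hV : (V - Vᵀ).toRows₂.toRows₁ = fromCols 0 (fromCols 0 1)) :
    alexPoly ((firstFamilyDiff ℤ k α γ * cableS (k + 1) V *
        (firstFamilyDiff ℤ k α γ)ᵀ).submatrix (cableSummand k α γ) (cableSummand k α γ)) =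
      alexPoly (cableS (k + 1) V.toBlocks₁₁) * X ^ (k * Fintype.card γ) := by
  have constPoly_neg_one : (constPoly (-1 : Matrix (Fin k × γ) (Fin k × γ) ℤ))ᵀ = -(1 ⊗ₖ 1) := by
    apply Matrix.ext; simp [one_apply, apply_ite, eq_comm]
  have constPoly_shift : constPoly (-(lowerShift ℤ k ⊗ₖ (1 : Matrix γ γ ℤ))) =
      -(lowerShift ℤ[X] k ⊗ₖ 1) := by
    apply Matrix.ext; simp [one_apply, lowerShift]
  have det_pencil₁₂ : (-(lowerShift ℤ[X] k ⊗ₖ (1 : Matrix γ γ ℤ[X])) -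
      (X : ℤ[X]) • -(1 ⊗ₖ 1)).det = X ^ (k * Fintype.card γ) := by
    rw [smul_neg, sub_neg_eq_add, neg_add_eq_sub, ← kronecker_smul,
      det_one_kronecker_sub_lowerShift_kronecker, det_smul, det_one, mul_one, ← pow_mul, mul_comm]
  have det_pencil₂₁ : ((X : ℤ[X]) • -(lowerShift ℤ[X] k ⊗ₖ (1 : Matrix γ γ ℤ[X])) -
      -(1 ⊗ₖ 1)).det = 1 := by
    rw [smul_neg, sub_neg_eq_add, neg_add_eq_sub, ← kronecker_smul,
      det_one_kronecker_sub_lowerShift_kronecker, det_one, one_pow]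
  obtain ⟨B, C, D, hblocks⟩ := firstFamilyDiff_conj_cableS_submatrix hV
  rw [hblocks, alexPoly_fromBlocks_fromBlocks_zero₁₁, constPoly_neg_one, constPoly_shift,
    det_pencil₁₂, det_pencil₂₁, mul_one]

theorem satellite_algebraic_genus_general (k : ℕ) {σ τ : Type*} [Fintype σ] [DecidableEq σ]
    [Fintype τ] [DecidableEq τ] (φ : σ ↪ τ) (V₁ : Matrix τ τ ℤ)
    (V₂ : Matrix (α ⊕ (γ ⊕ γ)) (α ⊕ (γ ⊕ γ)) ℤ)
    (hV₂ : (V₂ - V₂ᵀ).toRows₂.toRows₁ = fromCols 0 (fromCols 0 1)) {a b : ℕ}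
    (ha : Fintype.card σ + (k + 1) * Fintype.card α + 2 * (k * Fintype.card γ) = a)
    (hb : Fintype.card σ + b = Fintype.card τ + 2 * Fintype.card γ) :
    ∃ (P : Matrix (τ ⊕ (Fin (k + 1) × (α ⊕ (γ ⊕ γ)))) (τ ⊕ (Fin (k + 1) × (α ⊕ (γ ⊕ γ)))) ℤ)
      (e : τ ⊕ (Fin (k + 1) × (α ⊕ (γ ⊕ γ))) ≃ Fin a ⊕ Fin b),
      IsUnit P.det ∧
        alexPoly (reindex e e (P * fromBlocks V₁ 0 0 (cableS (k + 1) V₂) * Pᵀ)).toBlocks₁₁ =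
          alexPoly (V₁.submatrix φ φ) * alexPoly (cableS (k + 1) V₂.toBlocks₁₁) *
            X ^ (k * Fintype.card γ) := by
  set Q := firstFamilyDiff ℤ k α γ
  let P := fromBlocks (1 : Matrix τ τ ℤ) 0 0 Q
  have det_P : P.det = 1 := by
    rw [det_fromBlocks_zero₂₁, det_one, det_firstFamilyDiff, one_mul]
  have conj_blocks : P * fromBlocks V₁ 0 0 (cableS (k + 1) V₂) * Pᵀ =
      fromBlocks V₁ 0 0 (Q * cableS (k + 1) V₂ * Qᵀ) := by
    simp [P, fromBlocks_transpose, fromBlocks_multiply]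
  obtain ⟨e, he⟩ := exists_equiv_alexPoly_toBlocks₁₁_eq (φ.sumMap (cableSummand k α γ))
    (a := a) (b := b)
    (by simp only [Fintype.card_sum, Fintype.card_prod, Fintype.card_fin, ← ha]; ring)
    (by simp only [Fintype.card_sum, Fintype.card_prod, Fintype.card_fin, ← ha]; lia)
    (P * fromBlocks V₁ 0 0 (cableS (k + 1) V₂) * Pᵀ)
  refine ⟨P, e, det_P ▸ isUnit_one, he.trans ?_⟩
  rw [conj_blocks, mul_assoc (alexPoly _), ← alexPoly_firstFamilyDiff_conj_cableS_submatrix hV₂,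
    ← alexPoly_fromBlocks_zero_zero]
  congr 1
  apply Matrix.ext
  rintro (i | i) (j | j) <;> rfl

end Satellites

/-- let `V₁` be an `s×s` integer matrix whose top-left `2n₁×2n₁` block is
Alexander trivial, and let `V₂` be a `2m×2m` integer matrix, `m = n₂ + g` (indexed by
`Fin (2n₂) ⊕ (Fin g ⊕ Fin g)`), whose top-left `2n₂×2n₂` block `A` is Alexander trivial
and with `V₂ − V₂ᵀ = (A − Aᵀ) ⊕ J_{2g}`. Then for every `w ≥ 1` the block diagonal
matrix `V₁ ⊕ S_w(V₂)` is congruent over `ℤ` to a matrix whose top-left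
`2(n₁+wm−g)×2(n₁+wm−g)` block is Alexander trivial. -/
theorem satellite_algebraic_genus (s n₁ n₂ g w : ℕ) (hw : 1 ≤ w) (hs : 2 * n₁ ≤ s)
    (V₁ : Matrix (Fin s) (Fin s) ℤ)
    (hA₁ : alexPoly (V₁.submatrix (Fin.castLE hs) (Fin.castLE hs)) = (X : ℤ[X]) ^ n₁)
    (V₂ : Matrix (Fin (2 * n₂) ⊕ (Fin g ⊕ Fin g)) (Fin (2 * n₂) ⊕ (Fin g ⊕ Fin g)) ℤ)
    (hA₂ : alexPoly (Matrix.toBlocks₁₁ V₂) = (X : ℤ[X]) ^ n₂)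
    (hV₂ : V₂ - V₂ᵀ = Matrix.fromBlocks
      (Matrix.toBlocks₁₁ V₂ - (Matrix.toBlocks₁₁ V₂)ᵀ) 0 0
      (Matrix.fromBlocks 0 1 (-1) 0)) :
    ∃ (P : Matrix (Fin s ⊕ (Fin w × (Fin (2 * n₂) ⊕ (Fin g ⊕ Fin g))))
        (Fin s ⊕ (Fin w × (Fin (2 * n₂) ⊕ (Fin g ⊕ Fin g)))) ℤ)
      (e : (Fin s ⊕ (Fin w × (Fin (2 * n₂) ⊕ (Fin g ⊕ Fin g))))
        ≃ (Fin (2 * (n₁ + w * (n₂ + g) - g)) ⊕ Fin (s - 2 * n₁ + 2 * g))),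
      IsUnit P.det ∧
      alexPoly ((Matrix.reindex e e
          (P * Matrix.fromBlocks V₁ 0 0 (cableS w V₂) * Pᵀ)).toBlocks₁₁)
        = (X : ℤ[X]) ^ (n₁ + w * (n₂ + g) - g) := by
  obtain ⟨k, rfl⟩ := Nat.exists_eq_add_of_le' hw
  have rank : n₁ + (k + 1) * (n₂ + g) - g = n₁ + (k + 1) * n₂ + k * g :=
    Nat.sub_eq_of_eq_add (by ring)
  have skew_rows : (V₂ - V₂ᵀ).toRows₂.toRows₁ = fromCols 0 (fromCols 0 1) := by
    rw [hV₂]; rfl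
  obtain ⟨P, e, det_P, alexPoly_block⟩ :=
    satellite_algebraic_genus_general k (Fin.castLEEmb hs) V₁ V₂ skew_rows
      (a := 2 * (n₁ + (k + 1) * (n₂ + g) - g)) (b := s - 2 * n₁ + 2 * g)
      (by simp only [rank, Fintype.card_fin]; ring) (by simp only [Fintype.card_fin]; lia)
  refine ⟨P, e, det_P, alexPoly_block.trans ?_⟩
  rw [Fin.coe_castLEEmb, hA₁, alexPoly_cableS_of_eq_X_pow k hA₂, Fintype.card_fin, rank, pow_add,
    pow_add]
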